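/- Let A ∈ (2,∞) and B ∈ [0,∞) with A + min{1,B} > 3. Then there exists a constant C = C(A,B) > 0 such that for all x ∈ ℝ³: ∫_{ℝ³} [(1+|x−y|)(1+s(x−y))]^{−3/2} (1+|y|)^{−A} (1+s(y))^{−B} dy ≤ C (1+|x|)^{−3/2}. -/

import Mathlib

open MeasureTheory Real Set

noncomputable section

/-- Three-dimensional Euclidean space. -/
abbrev E3 : Type := EuclideanSpace ℝ (Fin 3)

/-- The wake function `s(x) = |x| + x₁`. -/
def wake (x : E3) : ℝ := ‖x‖ + x 0

/-- The `j`-th standard basis vector of `ℝ³`. -/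
def e3 (j : Fin 3) : E3 := EuclideanSpace.single j 1

/-- Euclidean norm of a triple of reals. -/
def vnorm (v : Fin 3 → ℝ) : ℝ := Real.sqrt (∑ i, v i ^ 2)

/-! Write `η_{a,b}(y) = (1 + |y|)^(-a) (1 + s(y))^(-b)`. In the convolution of the kernel `η_{c,d}`
with `η_{A,B}`, `B ≥ 0`, the larger of `|x - y|` and `|y|` is at least `|x| / 2`, so the
corresponding factor supplies the decay `(1 + |x|)^(-c)`. If it is `|x - y|`, what remains is
`η_{A,B}(y)`; if it is `|y|`, the leftover decay `(1 + |y|)^(-(A - c)) ≤ (1 + |x - y|)^(-(A - c))`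
is moved to the kernel, which becomes `η_{A,d}(x - y)`. Both are integrable by the same criterion,
`a + min 1 b > 3`: since `y₂² + y₃² = s(y) (|y| - y₁)`, a power `((1 + |y|) (1 + s(y)))^(-b)` decays
in both transversal coordinates, and distributing the remaining radial decay over the three
coordinates bounds `η_{a,b}` by a product of integrable functions of one variable. -/

theorem rpow_neg_le_rpow_mul_rpow_neg {u t k c : ℝ} (hu : 0 < u) (hk : 0 < k) (hut : u ≤ k * t)
    (hc : 0 ≤ c) : t ^ (-c) ≤ k ^ c * u ^ (-c) := by
  have ht : 0 < t := pos_of_mul_pos_right (hu.trans_le hut) hk.le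
  have hscale : (k * t) ^ (-c) ≤ u ^ (-c) := rpow_le_rpow_of_nonpos hu hut (neg_nonpos.mpr hc)
  rwa [mul_rpow hk.le ht.le, rpow_neg hk.le, inv_mul_le_iff₀ (by positivity)] at hscale

section Convolution

variable {E : Type*} [SeminormedAddCommGroup E] {f g : E → ℝ} {a c K L : ℝ}

theorem mul_sub_le_of_le_one_add_norm_rpow (hc : 0 ≤ c) (hca : c ≤ a)
    (hf₀ : ∀ z, 0 ≤ f z) (hg₀ : ∀ y, 0 ≤ g y)
    (hf : ∀ z, f z ≤ K * (1 + ‖z‖) ^ (-c)) (hg : ∀ y, g y ≤ L * (1 + ‖y‖) ^ (-a)) (x y : E) :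
    f (x - y) * g y ≤ 2 ^ c * (1 + ‖x‖) ^ (-c) *
      (K * g y + L * (f (x - y) * (1 + ‖x - y‖) ^ (-(a - c)))) := by
  have hx : ‖x‖ ≤ ‖x - y‖ + ‖y‖ := norm_le_norm_sub_add x y
  have hK : 0 ≤ K := nonneg_of_mul_nonneg_left ((hf₀ 0).trans (hf 0)) (by positivity)
  have hL : 0 ≤ L := nonneg_of_mul_nonneg_left ((hg₀ 0).trans (hg 0)) (by positivity)
  have hfz := hf₀ (x - y)
  have hgy := hg₀ y
  rcases le_total ‖y‖ ‖x - y‖ with hyz | hzy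
  · calc f (x - y) * g y ≤ K * (2 ^ c * (1 + ‖x‖) ^ (-c)) * g y := by
          gcongr
          exact (hf _).trans <| by
            gcongr
            exact rpow_neg_le_rpow_mul_rpow_neg (by positivity) two_pos (by linarith) hc
      _ = 2 ^ c * (1 + ‖x‖) ^ (-c) * (K * g y) := by ring
      _ ≤ _ := by
          gcongr
          exact le_add_of_nonneg_right (by positivity)
  · have hleftover : (1 + ‖y‖) ^ (-(a - c)) ≤ (1 + ‖x - y‖) ^ (-(a - c)) :=
      rpow_le_rpow_of_nonpos (by positivity) (by linarith) (by linarith)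
    have hg' : g y ≤ L * (2 ^ c * (1 + ‖x‖) ^ (-c) * (1 + ‖x - y‖) ^ (-(a - c))) :=
      calc g y ≤ L * (1 + ‖y‖) ^ (-a) := hg y
        _ = L * ((1 + ‖y‖) ^ (-c) * (1 + ‖y‖) ^ (-(a - c))) := by
            rw [← rpow_add (by positivity)]
            ring_nf
        _ ≤ _ := by
            gcongr
            exact rpow_neg_le_rpow_mul_rpow_neg (by positivity) two_pos (by linarith) hc
    calc f (x - y) * g y
        ≤ f (x - y) * (L * (2 ^ c * (1 + ‖x‖) ^ (-c) * (1 + ‖x - y‖) ^ (-(a - c)))) := by gcongr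
      _ = 2 ^ c * (1 + ‖x‖) ^ (-c) * (L * (f (x - y) * (1 + ‖x - y‖) ^ (-(a - c)))) := by ring
      _ ≤ _ := by
          gcongr
          exact le_add_of_nonneg_left (by positivity)

variable [MeasurableSpace E] [MeasurableAdd E] [MeasurableNeg E] {μ : Measure E}
  [μ.IsAddLeftInvariant] [μ.IsNegInvariant]

theorem integral_mul_sub_le_of_le_one_add_norm_rpow
    (hc : 0 ≤ c) (hca : c ≤ a) (hf₀ : ∀ z, 0 ≤ f z) (hg₀ : ∀ y, 0 ≤ g y)
    (hf : ∀ z, f z ≤ K * (1 + ‖z‖) ^ (-c)) (hg : ∀ y, g y ≤ L * (1 + ‖y‖) ^ (-a))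
    (hg_int : Integrable g μ) (hf_int : Integrable (fun z ↦ f z * (1 + ‖z‖) ^ (-(a - c))) μ)
    (x : E) :
    ∫ y, f (x - y) * g y ∂μ ≤
      2 ^ c * (K * ∫ y, g y ∂μ + L * ∫ z, f z * (1 + ‖z‖) ^ (-(a - c)) ∂μ) *
        (1 + ‖x‖) ^ (-c) := by
  have hfx_int := hf_int.comp_sub_left x
  calc ∫ y, f (x - y) * g y ∂μ
      ≤ ∫ y, 2 ^ c * (1 + ‖x‖) ^ (-c) *
          (K * g y + L * (f (x - y) * (1 + ‖x - y‖) ^ (-(a - c)))) ∂μ :=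
        integral_mono_of_nonneg (.of_forall fun y ↦ mul_nonneg (hf₀ _) (hg₀ y))
          (((hg_int.const_mul K).add (hfx_int.const_mul L)).const_mul _)
          (.of_forall (mul_sub_le_of_le_one_add_norm_rpow hc hca hf₀ hg₀ hf hg x))
    _ = _ := by
        rw [integral_const_mul, integral_add (hg_int.const_mul K) (hfx_int.const_mul L),
          integral_const_mul, integral_const_mul,
          integral_sub_left_eq_self (fun z ↦ f z * (1 + ‖z‖) ^ (-(a - c))) μ x]
        ring

end Convolution

theorem integrable_prod_one_add_abs_rpow {ι : Type*} [Fintype ι] {q : ℝ} (hq : 1 < q) :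
    Integrable fun y : EuclideanSpace ℝ ι ↦ ∏ i, (1 + |y i|) ^ (-q) := by
  have hcoord : Integrable fun t : ℝ ↦ (1 + |t|) ^ (-q) :=
    integrable_one_add_norm (by simpa using hq)
  exact (EuclideanSpace.volume_preserving_symm_measurableEquiv_toLp ι).integrable_comp_of_integrable
    (Integrable.fintype_prod (f := fun _ t ↦ (1 + |t|) ^ (-q)) fun _ ↦ hcoord)

section Wake

theorem abs_apply_le_norm {ι : Type*} [Fintype ι] (y : EuclideanSpace ℝ ι) (i : ι) :
    |y i| ≤ ‖y‖ :=
  PiLp.norm_apply_le y i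

theorem wake_nonneg (y : E3) : 0 ≤ wake y :=
  neg_le_iff_add_nonneg'.mp (abs_le.mp (abs_apply_le_norm y 0)).1

theorem wake_le_two_mul_norm (y : E3) : wake y ≤ 2 * ‖y‖ := by
  have := (abs_le.mp (abs_apply_le_norm y 0)).2
  unfold wake
  linarith

theorem continuous_wake : Continuous wake := by
  unfold wake
  fun_prop

theorem transversal_sq_eq_wake_mul (y : E3) :
    |y 1| ^ 2 + |y 2| ^ 2 = wake y * (‖y‖ - y 0) := by
  have hnorm : ‖y‖ ^ 2 = y 0 ^ 2 + y 1 ^ 2 + y 2 ^ 2 := by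
    simp [EuclideanSpace.norm_sq_eq, Fin.sum_univ_three]
  rw [wake, sq_abs, sq_abs]
  linarith

theorem transversal_prod_le (y : E3) :
    (1 + |y 1|) * (1 + |y 2|) ≤ 2 * ((1 + ‖y‖) * (1 + wake y)) := by
  have hdiff : ‖y‖ - y 0 ≤ 2 * ‖y‖ := by linarith [(abs_le.mp (abs_apply_le_norm y 0)).1]
  have hcross : |y 1| * |y 2| ≤ wake y * ‖y‖ := by
    have hsq := mul_le_mul_of_nonneg_left hdiff (wake_nonneg y)
    rw [← transversal_sq_eq_wake_mul] at hsq
    linarith [two_mul_le_add_sq |y 1| |y 2|]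
  have hprod := mul_nonneg (wake_nonneg y) (norm_nonneg y)
  linarith [abs_apply_le_norm y 1, abs_apply_le_norm y 2, wake_nonneg y]

/-- The anisotropic weight `(1 + |y|)^(-a) (1 + s(y))^(-b)`, with the signs chosen so that positive
exponents mean decay. -/
def wakeWeight (a b : ℝ) (y : E3) : ℝ := (1 + ‖y‖) ^ (-a) * (1 + wake y) ^ (-b)

variable {a b : ℝ}

theorem wakeWeight_nonneg (a b : ℝ) (y : E3) : 0 ≤ wakeWeight a b y := by
  have := wake_nonneg y
  unfold wakeWeight
  positivity

theorem wakeWeight_self (p : ℝ) (y : E3) :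
    wakeWeight p p y = ((1 + ‖y‖) * (1 + wake y)) ^ (-p) :=
  (mul_rpow (by positivity) (by linarith [wake_nonneg y])).symm

theorem wakeWeight_mul_rpow (a b e : ℝ) (y : E3) :
    wakeWeight a b y * (1 + ‖y‖) ^ (-e) = wakeWeight (a + e) b y := by
  rw [wakeWeight, wakeWeight, neg_add, rpow_add (by positivity)]
  ring

theorem continuous_wakeWeight (a b : ℝ) : Continuous (wakeWeight a b) := by
  have hnorm_ne (y : E3) : 1 + ‖y‖ ≠ 0 := by positivity
  have hwake_ne (y : E3) : 1 + wake y ≠ 0 := (add_pos_of_pos_of_nonneg one_pos (wake_nonneg y)).ne'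
  exact ((continuous_const.add continuous_norm).rpow_const fun y ↦ .inl (hnorm_ne y)).mul
    ((continuous_const.add continuous_wake).rpow_const fun y ↦ .inl (hwake_ne y))

theorem wakeWeight_le_wakeWeight_right {b' : ℝ} (hb : b' ≤ b) (y : E3) :
    wakeWeight a b y ≤ wakeWeight a b' y := by
  unfold wakeWeight
  gcongr
  linarith [wake_nonneg y]

theorem wakeWeight_le_one_add_norm_rpow (a b : ℝ) (y : E3) :
    wakeWeight a b y ≤ 2 ^ (-min 0 b) * (1 + ‖y‖) ^ (-(a + min 0 b)) := by
  have hwake := wake_nonneg y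
  calc wakeWeight a b y ≤ wakeWeight a (min 0 b) y :=
        wakeWeight_le_wakeWeight_right (min_le_right 0 b) y
    _ ≤ (1 + ‖y‖) ^ (-a) * (2 * (1 + ‖y‖)) ^ (-min 0 b) := by
        unfold wakeWeight
        gcongr
        · exact neg_nonneg.mpr (min_le_left 0 b)
        · linarith [wake_le_two_mul_norm y]
    _ = _ := by
        rw [mul_rpow (by norm_num) (by positivity), neg_add, rpow_add (by positivity)]
        ring

/- Split `a - b = q + 2 * (q - b)` with `q = (a + b) / 3`: of the radial decay, `q` goes to the
axial coordinate and `q - b` to each transversal one, which receives its missing `b` from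
`transversal_prod_le`. -/
theorem wakeWeight_le_prod (hb : 0 ≤ b) (hba : 2 * b ≤ a) (y : E3) :
    wakeWeight a b y ≤ 2 ^ b * ∏ i, (1 + |y i|) ^ (-((a + b) / 3)) := by
  set q := (a + b) / 3 with hq
  have hqb : 0 ≤ q - b := by linarith
  have hcoord (i : Fin 3) {e : ℝ} (he : 0 ≤ e) : (1 + ‖y‖) ^ (-e) ≤ (1 + |y i|) ^ (-e) :=
    rpow_le_rpow_of_nonpos (by positivity) (by linarith [abs_apply_le_norm y i]) (by linarith)
  have hradial : (1 + ‖y‖) ^ (-(a - b)) ≤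
      (1 + |y 0|) ^ (-q) * (1 + |y 1|) ^ (-(q - b)) * (1 + |y 2|) ^ (-(q - b)) :=
    calc (1 + ‖y‖) ^ (-(a - b))
        = (1 + ‖y‖) ^ (-q) * (1 + ‖y‖) ^ (-(q - b)) * (1 + ‖y‖) ^ (-(q - b)) := by
          rw [← rpow_add (by positivity), ← rpow_add (by positivity), hq]
          ring_nf
      _ ≤ _ := by
          gcongr ?_ * ?_ * ?_
          exacts [hcoord 0 (by linarith), hcoord 1 hqb, hcoord 2 hqb]
  have htransversal : wakeWeight b b y ≤ 2 ^ b * ((1 + |y 1|) ^ (-b) * (1 + |y 2|) ^ (-b)) := by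
    rw [wakeWeight_self, ← mul_rpow (by positivity) (by positivity)]
    exact rpow_neg_le_rpow_mul_rpow_neg (by positivity) two_pos (transversal_prod_le y) hb
  calc wakeWeight a b y = (1 + ‖y‖) ^ (-(a - b)) * wakeWeight b b y := by
        rw [mul_comm, wakeWeight_mul_rpow, add_sub_cancel]
    _ ≤ (1 + |y 0|) ^ (-q) * (1 + |y 1|) ^ (-(q - b)) * (1 + |y 2|) ^ (-(q - b)) *
          (2 ^ b * ((1 + |y 1|) ^ (-b) * (1 + |y 2|) ^ (-b))) :=
        mul_le_mul hradial htransversal (wakeWeight_nonneg b b y) (by positivity)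
    _ = 2 ^ b * ((1 + |y 0|) ^ (-q) * ((1 + |y 1|) ^ (-(q - b)) * (1 + |y 1|) ^ (-b)) *
          ((1 + |y 2|) ^ (-(q - b)) * (1 + |y 2|) ^ (-b))) := by ring
    _ = _ := by
        rw [← rpow_add (by positivity), ← rpow_add (by positivity), Fin.prod_univ_three]
        ring_nf

theorem integrable_wakeWeight (h : 3 < a + min 1 b) : Integrable (wakeWeight a b) := by
  suffices ∃ F : E3 → ℝ, Integrable F ∧ ∀ y, wakeWeight a b y ≤ F y by
    obtain ⟨F, hF, hle⟩ := this
    refine hF.mono' (continuous_wakeWeight a b).aestronglyMeasurable (.of_forall fun y ↦ ?_)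
    rw [norm_of_nonneg (wakeWeight_nonneg a b y)]
    exact hle y
  rcases le_total b 0 with hb | hb
  · refine ⟨_, (integrable_one_add_norm ?_).const_mul _, wakeWeight_le_one_add_norm_rpow a b⟩
    rw [finrank_euclideanSpace_fin, min_eq_right hb]
    rw [min_eq_right (hb.trans zero_le_one)] at h
    exact_mod_cast h
  · have hmin : min 1 b ≤ 1 := min_le_left 1 b
    exact ⟨_, (integrable_prod_one_add_abs_rpow (by linarith)).const_mul _, fun y ↦
      (wakeWeight_le_wakeWeight_right (min_le_right 1 b) y).trans
        (wakeWeight_le_prod (le_min zero_le_one hb) (by linarith) y)⟩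

end Wake

theorem conv_anisotropic_threehalves_general {A B c d : ℝ} (hc : 0 ≤ c) (hd : 0 ≤ d)
    (hcA : c ≤ A + min 0 B) (hAB : 3 < A + min 1 B) (hAd : 3 < A + min 0 B + min 1 d) :
    ∃ C > 0, ∀ x : E3,
      ∫ y, wakeWeight c d (x - y) * wakeWeight A B y ≤ C * (1 + ‖x‖) ^ (-c) := by
  have hkernel (z : E3) : wakeWeight c d z ≤ 1 * (1 + ‖z‖) ^ (-c) := by
    simpa [min_eq_left hd] using wakeWeight_le_one_add_norm_rpow c d z
  have hkernel_int : Integrable fun z ↦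
      wakeWeight c d z * (1 + ‖z‖) ^ (-(A + min 0 B - c)) := by
    simpa only [wakeWeight_mul_rpow, add_sub_cancel] using integrable_wakeWeight hAd
  obtain ⟨C, hC⟩ : ∃ C, ∀ x : E3,
      ∫ y, wakeWeight c d (x - y) * wakeWeight A B y ≤ C * (1 + ‖x‖) ^ (-c) :=
    ⟨_, integral_mul_sub_le_of_le_one_add_norm_rpow hc hcA (wakeWeight_nonneg c d)
      (wakeWeight_nonneg A B) hkernel (wakeWeight_le_one_add_norm_rpow A B)
      (integrable_wakeWeight hAB) hkernel_int⟩
  refine ⟨max 1 C, by positivity, fun x ↦ (hC x).trans ?_⟩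
  gcongr
  exact le_max_right 1 C

/-- **Anisotropic convolution estimate:** for `A > 2`, `B ≥ 0` with `A + min{1,B} > 3`,
`∫ [(1+|x−y|)(1+s(x−y))]^{−3/2}(1+|y|)^{−A}(1+s(y))^{−B} dy ≤ C (1+|x|)^{−3/2}`. -/
theorem conv_anisotropic_threehalves (A B : ℝ) (hA : 2 < A) (hB : 0 ≤ B)
    (hAB : 3 < A + min 1 B) :
    ∃ C > 0, ∀ x : E3,
      (∫ y : E3, ((1 + ‖x - y‖) * (1 + wake (x - y))) ^ (-(3/2 : ℝ)) *
          (1 + ‖y‖) ^ (-A) * (1 + wake y) ^ (-B)) ≤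
        C * (1 + ‖x‖) ^ (-(3/2 : ℝ)) := by
  simp only [← wakeWeight_self, mul_assoc]
  exact conv_anisotropic_threehalves_general (by norm_num) (by norm_num)
    (by rw [min_eq_left hB]; linarith) hAB (by rw [min_eq_left hB]; norm_num; linarith)

end
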